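/- Let X be a Banach space, ∂ a feasible subdifferential, and f : X → ℝ ∪ {+∞} a proper lower semicontinuous function. If ∂f is a monotone operator (⟨x₂* − x₁*, x₂ − x₁⟩ ≥ 0 whenever x_i* ∈ ∂f(x_i), i = 1, 2), then f is convex. -/

import Mathlib

open Filter Topology

/-- Convexity for `EReal`-valued functions on a set. -/
def ERealConvexOn {X : Type*} [AddCommGroup X] [Module ℝ X]
    (U : Set X) (f : X → EReal) : Prop :=
  ∀ x ∈ U, ∀ y ∈ U, ∀ a b : ℝ, 0 ≤ a → 0 ≤ b → a + b = 1 →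
    f (a • x + b • y) ≤ (a : EReal) * f x + (b : EReal) * f y

/-- The Fenchel (convex) subdifferential of an `EReal`-valued function relative to a set `U`. -/
def FenchelSubdiffOn {X : Type*} [NormedAddCommGroup X] [NormedSpace ℝ X]
    (f : X → EReal) (U : Set X) (x : X) : Set (X →L[ℝ] ℝ) :=
  {p | ∀ y ∈ U, f x + ((p (y - x) : ℝ) : EReal) ≤ f y}

/-- A feasible subdifferential in the sense of Ivanov–Zlateva: a map assigning to each
extended-real-valued function and point a set of continuous linear functionals, satisfying
(P1) agreement with the Fenchel subdifferential on convex continuous functions, and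
(P2) a fuzzy variational sum rule at local minima of `f + g` with `g` convex continuous. -/
structure FeasibleSubdifferential (X : Type*) [NormedAddCommGroup X] [NormedSpace ℝ X] where
  D : (X → EReal) → X → Set (X →L[ℝ] ℝ)
  P1 : ∀ (f : X → EReal) (x : X) (U : Set X), IsOpen U → x ∈ U → Convex ℝ U →
      ERealConvexOn U f → ContinuousOn f U → (∀ y ∈ U, f y ≠ ⊤ ∧ f y ≠ ⊥) →
      D f x = FenchelSubdiffOn f U x
  P2 : ∀ (f g : X → EReal) (x : X) (V : Set X), LowerSemicontinuous f → f x ≠ ⊤ →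
      IsOpen V → x ∈ V → Convex ℝ V → ERealConvexOn V g → ContinuousOn g V →
      (∀ y ∈ V, g y ≠ ⊤ ∧ g y ≠ ⊥) →
      IsLocalMin (fun y => f y + g y) x →
      ∃ (y : ℕ → X) (ys : ℕ → X →L[ℝ] ℝ) (ystar : X →L[ℝ] ℝ),
        Tendsto y atTop (𝓝 x) ∧ Tendsto (fun n => f (y n)) atTop (𝓝 (f x)) ∧
        (∀ n, ys n ∈ D f (y n)) ∧
        (∀ v : X, Tendsto (fun n => ys n v) atTop (𝓝 (ystar v))) ∧
        -ystar ∈ FenchelSubdiffOn g V x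

/-!
Monotonicity upgrades local subgradients to global ones. If `ξ ∈ ∂f(x)` failed to minorize `f` at
some `y`, minimize `f - ξ` plus a small cone at `x` over the segment `[y, x]`; a steep multiple of
the distance to the segment and Ekeland's principle turn the minimizer into a nearby local minimizer
`z ≠ x` in the whole space, and the sum rule there yields a subgradient `ζ` at some `u` with
`ξ (x - u) < ζ (x - u)`, against monotonicity. So every subgradient is the slope of an affine
minorant touching `f`. One such minorant, with lower semicontinuity, puts any `r < f x` below `f`
plus a steep enough cone at `x`; Ekeland's principle for `f` plus a steeper cone then produces a
subgradient whose affine minorant exceeds `r` at `x`. Hence `f` is a supremum of affine functions.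
-/

open Metric Set

theorem lowerSemicontinuous_add_coe {X : Type*} [TopologicalSpace X] {φ : X → EReal}
    (hφ : LowerSemicontinuous φ) {k : X → ℝ} (hk : Continuous k) :
    LowerSemicontinuous fun x => φ x + (k x : EReal) :=
  hφ.add' (continuous_coe_real_ereal.comp hk).lowerSemicontinuous fun _ =>
    EReal.continuousAt_add (Or.inr (EReal.coe_ne_bot _)) (Or.inr (EReal.coe_ne_top _))

theorem le_add_coe_of_nonneg (a : EReal) {b : ℝ} (hb : 0 ≤ b) : a ≤ a + b :=
  le_add_of_nonneg_right (EReal.coe_nonneg.2 hb)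

theorem exists_pos_add_mul_lt {a b : EReal} (ha : a ≠ ⊥) (hab : a < b) (d : ℝ) :
    ∃ c > 0, a + (c * d : ℝ) < b := by
  lift a to ℝ using ⟨hab.ne_top, ha⟩
  obtain ⟨r, har, hrb⟩ := EReal.lt_iff_exists_real_btwn.1 hab
  obtain ⟨c, hc, hcd⟩ := exists_pos_mul_lt (sub_pos.2 (EReal.coe_lt_coe_iff.1 har)) d
  exact ⟨c, hc, lt_trans (EReal.coe_lt_coe_iff.2 (by linarith : a + c * d < r)) hrb⟩

theorem exists_mem_forall_lt_add {α : Type*} {φ : α → EReal} {s : Set α} {m δ : ℝ}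
    (hm : ∀ x ∈ s, (m : EReal) ≤ φ x) (hs : ∃ x ∈ s, φ x ≠ ⊤) (hδ : 0 < δ) :
    ∃ y ∈ s, ∀ w ∈ s, φ y < φ w + δ := by
  obtain ⟨x, hxs, hx⟩ := hs
  obtain ⟨I, hI⟩ : ∃ I : ℝ, (I : EReal) = ⨅ w ∈ s, φ w :=
    ⟨_, EReal.coe_toReal ((iInf₂_le x hxs).trans_lt hx.lt_top).ne
      ((EReal.bot_lt_coe m).trans_le (le_iInf₂ hm)).ne'⟩
  have hlt : ⨅ w ∈ s, φ w < ((I + δ : ℝ) : EReal) := by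
    rw [← hI]; exact EReal.coe_lt_coe_iff.2 (lt_add_of_pos_right I hδ)
  obtain ⟨y, hy⟩ := iInf_lt_iff.1 hlt
  obtain ⟨hys, hy⟩ := iInf_lt_iff.1 hy
  refine ⟨y, hys, fun w hw => hy.trans_le ?_⟩
  rw [EReal.coe_add]
  gcongr
  exact hI.trans_le (iInf₂_le w hw)

section Ekeland

variable {X : Type*} [MetricSpace X] [CompleteSpace X]

/-- Dancs–Hegedűs–Medvegyev theorem. -/
theorem exists_mem_eq_singleton_of_subset_closedBall {S : X → Set X} {p : X}
    (hrefl : ∀ x, x ∈ S x) (htrans : ∀ x, ∀ y ∈ S x, S y ⊆ S x) (hclosed : ∀ x, IsClosed (S x))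
    (hsmall : ∀ x ∈ S p, ∀ δ > 0, ∃ y ∈ S x, S y ⊆ closedBall y δ) :
    ∃ z ∈ S p, S z = {z} := by
  choose! next next_mem next_small using hsmall
  let x : ℕ → X := fun n => Nat.rec p (fun k y => next y ((1 / 2) ^ k)) n
  have hpos (n : ℕ) : (0 : ℝ) < (1 / 2) ^ n := by positivity
  have hx (n : ℕ) : x n ∈ S p := by
    induction n with
    | zero => exact hrefl p
    | succ n ih => exact htrans p _ ih (next_mem _ ih _ (hpos n))
  have hanti : Antitone fun n => S (x n) :=
    antitone_nat_of_succ_le fun n => htrans _ _ (next_mem _ (hx n) _ (hpos n))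
  have hdist (n : ℕ) (w : X) (hw : w ∈ S (x (n + 1))) : dist (x (n + 1)) w ≤ (1 / 2) ^ n :=
    mem_closedBall'.1 (next_small _ (hx n) _ (hpos n) hw)
  have hlim : Tendsto (fun n : ℕ => (1 / 2 : ℝ) ^ n) atTop (𝓝 0) :=
    tendsto_pow_atTop_nhds_zero_of_lt_one (by norm_num) (by norm_num)
  have hcauchy : CauchySeq fun n => x (n + 1) :=
    cauchySeq_of_le_tendsto_0' _
      (fun n m hnm => hdist n _ (hanti (Nat.succ_le_succ hnm) (hrefl _))) hlim
  obtain ⟨z, hz⟩ := cauchySeq_tendsto_of_complete hcauchy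
  have hzS (n : ℕ) : z ∈ S (x n) := (hclosed _).mem_of_tendsto hz <| by
    filter_upwards [eventually_ge_atTop n] with m hm using hanti (hm.trans m.le_succ) (hrefl _)
  refine ⟨z, hzS 0, (singleton_subset_iff.2 (hrefl z)).antisymm' fun w hw => ?_⟩
  have hwlim : Tendsto (fun n => x (n + 1)) atTop (𝓝 w) :=
    tendsto_iff_dist_tendsto_zero.2 <| squeeze_zero (fun _ => dist_nonneg)
      (fun n => hdist n w (htrans _ z (hzS (n + 1)) hw)) hlim
  exact tendsto_nhds_unique hwlim hz

variable {φ : X → EReal} {m ε : ℝ}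

theorem ekeland_variational_principle (hφ : LowerSemicontinuous φ)
    (hm : ∀ x, (m : EReal) ≤ φ x) (hε : 0 < ε) {p : X} (hp : φ p ≠ ⊤) :
    ∃ z, φ z + (ε * dist z p : ℝ) ≤ φ p ∧ ∀ w, φ z ≤ φ w + (ε * dist w z : ℝ) := by
  let S (x : X) : Set X := {w | φ w + (ε * dist w x : ℝ) ≤ φ x}
  have hrefl (x : X) : x ∈ S x := by simp [S]
  have htrans (x : X) : ∀ y ∈ S x, S y ⊆ S x := fun y hy w hw => calc
    φ w + (ε * dist w x : ℝ) ≤ φ w + (ε * dist w y + ε * dist y x : ℝ) := by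
      gcongr
      exact (mul_le_mul_of_nonneg_left (dist_triangle w y x) hε.le).trans_eq (mul_add ..)
    _ = φ w + (ε * dist w y : ℝ) + (ε * dist y x : ℝ) := by rw [EReal.coe_add, add_assoc]
    _ ≤ φ y + (ε * dist y x : ℝ) := by gcongr; exact hw
    _ ≤ φ x := hy
  have hclosed (x : X) : IsClosed (S x) :=
    (lowerSemicontinuous_add_coe hφ
      (by fun_prop : Continuous fun w => ε * dist w x)).isClosed_preimage (φ x)
  have hfin (x : X) (hx : x ∈ S p) : φ x ≠ ⊤ :=
    ((le_add_coe_of_nonneg _ (by positivity)).trans hx |>.trans_lt hp.lt_top).ne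
  have hsmall : ∀ x ∈ S p, ∀ δ > 0, ∃ y ∈ S x, S y ⊆ closedBall y δ := by
    intro x hx δ hδ
    obtain ⟨y, hyS, hy⟩ := exists_mem_forall_lt_add (s := S x) (fun w _ => hm w)
      ⟨x, hrefl x, hfin x hx⟩ (mul_pos hε hδ)
    refine ⟨y, hyS, fun w hw => ?_⟩
    have hlt : ((ε * dist w y : ℝ) : EReal) < (ε * δ : ℝ) :=
      lt_of_add_lt_add_left (hw.trans_lt (hy w (htrans x y hyS hw)))
    exact (lt_of_mul_lt_mul_left (EReal.coe_lt_coe_iff.1 hlt) hε.le).le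
  obtain ⟨z, hzp, hz⟩ := exists_mem_eq_singleton_of_subset_closedBall hrefl htrans hclosed hsmall
  refine ⟨z, hzp, fun w => ?_⟩
  by_cases hw : w ∈ S z
  · obtain rfl : w = z := by rwa [hz] at hw
    exact le_add_coe_of_nonneg _ (by positivity)
  · exact (not_le.1 hw).le

theorem exists_isLocalMin_add_dist (hφ : LowerSemicontinuous φ) (hε : 0 < ε) {p : X} {R : ℝ}
    (hR : 0 ≤ R) (hm : ∀ x ∈ closedBall p R, (m : EReal) ≤ φ x) (hp : φ p < (m + ε * R : ℝ)) :
    ∃ z ∈ ball p R, φ z ≠ ⊤ ∧ IsLocalMin (fun w => φ w + (ε * dist w z : ℝ)) z := by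
  have := (isClosed_closedBall (x := p) (ε := R)).completeSpace_coe
  obtain ⟨⟨z, hzB⟩, hzp, hzmin⟩ := ekeland_variational_principle (hφ.comp continuous_subtype_val)
    (fun x : closedBall p R => hm x x.2) hε (p := ⟨p, mem_closedBall_self hR⟩) hp.ne_top
  have hzlt : φ z + (ε * dist z p : ℝ) < (m + ε * R : ℝ) := hzp.trans_lt hp
  have hzR : dist z p < R := by
    have hlt : ((m + ε * dist z p : ℝ) : EReal) < (m + ε * R : ℝ) := by
      refine lt_of_le_of_lt ?_ hzlt
      rw [EReal.coe_add]
      gcongr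
      exact hm z hzB
    exact lt_of_mul_lt_mul_left (lt_of_add_lt_add_left (EReal.coe_lt_coe_iff.1 hlt)) hε.le
  refine ⟨z, hzR, ((le_add_coe_of_nonneg _ (by positivity)).trans_lt hzlt).ne_top, ?_⟩
  filter_upwards [isOpen_ball.mem_nhds hzR] with w hw
  have hle : φ z ≤ φ w + (ε * dist w z : ℝ) := hzmin ⟨w, ball_subset_closedBall hw⟩
  simpa only [dist_self, mul_zero, EReal.coe_zero, add_zero] using hle

end Ekeland

section Penalization

variable {X : Type*} [PseudoMetricSpace X] {φ : X → EReal} {S : Set X}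

theorem exists_forall_le_add_infDist (hφ : LowerSemicontinuous φ) (hS : IsCompact S)
    (hne : S.Nonempty) {B : Set X} {m b : ℝ} (hm : ∀ x ∈ S, (m : EReal) < φ x)
    (hb : ∀ x ∈ B, (b : EReal) ≤ φ x) :
    ∃ K ≥ 0, ∀ x ∈ B, (m : EReal) ≤ φ x + (K * infDist x S : ℝ) := by
  obtain ⟨δ, hδ, hδS⟩ := hS.exists_thickening_subset_open (hφ.isOpen_preimage (m : EReal)) hm
  refine ⟨|m - b| / δ, by positivity, fun x hx => ?_⟩
  have hpenalty : 0 ≤ |m - b| / δ * infDist x S := mul_nonneg (by positivity) infDist_nonneg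
  by_cases hxS : x ∈ thickening δ S
  · exact (le_of_lt (hδS hxS)).trans (le_add_coe_of_nonneg _ hpenalty)
  · have hfar : δ ≤ infDist x S := not_lt.1 fun h => hxS ((mem_thickening_iff_infDist_lt hne).2 h)
    have hlarge : |m - b| ≤ |m - b| / δ * infDist x S := calc
      |m - b| = |m - b| / δ * δ := (div_mul_cancel₀ _ hδ.ne').symm
      _ ≤ _ := by gcongr
    calc (m : EReal) ≤ (b + |m - b| / δ * infDist x S : ℝ) :=
          EReal.coe_le_coe_iff.2 (by linarith [le_abs_self (m - b)])
      _ ≤ φ x + (|m - b| / δ * infDist x S : ℝ) := by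
          rw [EReal.coe_add]; gcongr; exact hb x hx

theorem exists_closedBall_forall_le {x : X} (hφ : LowerSemicontinuousAt φ x) {m : ℝ}
    (hm : (m : EReal) < φ x) : ∃ r > 0, ∀ w ∈ closedBall x r, (m : EReal) ≤ φ w := by
  obtain ⟨r, hr, h⟩ := nhds_basis_closedBall.eventually_iff.1 (hφ m hm)
  exact ⟨r, hr, fun w hw => (h hw).le⟩

theorem exists_closedBall_forall_le_add_infDist (hφ : LowerSemicontinuous φ) (hS : IsCompact S)
    {p : X} (hpS : p ∈ S) (hmin : IsMinOn φ S p) (hbot : φ p ≠ ⊥) (htop : φ p ≠ ⊤) {ε R₀ : ℝ}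
    (hε : 0 < ε) (hR₀ : 0 < R₀) :
    ∃ R > 0, R < R₀ ∧ ∃ K ≥ 0, ∃ m : ℝ, φ p < (m + ε * R : ℝ) ∧
      ∀ x ∈ closedBall p R, (m : EReal) ≤ φ x + (K * infDist x S : ℝ) := by
  lift φ p to ℝ using ⟨htop, hbot⟩ with a ha
  have hlt {η : ℝ} (hη : 0 < η) : ((a - η : ℝ) : EReal) < a :=
    EReal.coe_lt_coe_iff.2 (sub_lt_self a hη)
  obtain ⟨r, hr, hball⟩ := exists_closedBall_forall_le (hφ p) ((hlt one_pos).trans_eq ha)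
  obtain ⟨R, hR, hRlt⟩ := exists_between (lt_min hr hR₀)
  have hεR : 0 < ε * R := mul_pos hε hR
  obtain ⟨K, hK, hKle⟩ := exists_forall_le_add_infDist hφ hS ⟨p, hpS⟩ (m := a - ε * R / 2)
    (fun x hx => (hlt (half_pos hεR)).trans_le (ha.trans_le (hmin hx)))
    fun x hx => hball x (closedBall_subset_closedBall (hRlt.le.trans (min_le_left _ _)) hx)
  exact ⟨R, hR, hRlt.trans_le (min_le_right _ _), K, hK, a - ε * R / 2,
    EReal.coe_lt_coe_iff.2 (by linarith), hKle⟩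

end Penalization

theorem convexOn_infDist {X : Type*} [SeminormedAddCommGroup X] [NormedSpace ℝ X] {S : Set X}
    (hS : Convex ℝ S) : ConvexOn ℝ univ fun x => infDist x S := by
  rcases S.eq_empty_or_nonempty with rfl | hne
  · simpa only [infDist_empty] using convexOn_const 0 convex_univ
  refine ⟨convex_univ, fun x _ y _ a b ha hb hab => le_of_forall_pos_le_add fun δ hδ => ?_⟩
  obtain ⟨u, hu, hxu⟩ := (infDist_lt_iff hne).1 (lt_add_of_pos_right (infDist x S) hδ)
  obtain ⟨v, hv, hyv⟩ := (infDist_lt_iff hne).1 (lt_add_of_pos_right (infDist y S) hδ)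
  calc infDist (a • x + b • y) S ≤ dist (a • x + b • y) (a • u + b • v) :=
        infDist_le_dist_of_mem (hS hu hv ha hb hab)
    _ ≤ a * dist x u + b * dist y v := by
        simpa only [dist_smul₀, Real.norm_of_nonneg ha, Real.norm_of_nonneg hb] using
          dist_add_add_le (a • x) (b • y) (a • u) (b • v)
    _ ≤ a * (infDist x S + δ) + b * (infDist y S + δ) := by gcongr
    _ = a • infDist x S + b • infDist y S + δ := by
        rw [smul_eq_mul, smul_eq_mul]; linear_combination δ * hab

theorem tendsto_apply_of_forall_tendsto {𝕜 E F : Type*} [NontriviallyNormedField 𝕜]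
    [SeminormedAddCommGroup E] [NormedSpace 𝕜 E] [CompleteSpace E] [SeminormedAddCommGroup F]
    [NormedSpace 𝕜 F] {L : ℕ → E →L[𝕜] F} {L₀ : E →L[𝕜] F}
    (hL : ∀ v, Tendsto (fun n => L n v) atTop (𝓝 (L₀ v))) {v : ℕ → E} {v₀ : E}
    (hv : Tendsto v atTop (𝓝 v₀)) : Tendsto (fun n => L n (v n)) atTop (𝓝 (L₀ v₀)) := by
  obtain ⟨C, hC⟩ : ∃ C, ∀ n, ‖L n‖ ≤ C := banach_steinhaus fun x => by
    obtain ⟨C, hC⟩ := (hL x).norm.bddAbove_range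
    exact ⟨C, fun n => hC ⟨n, rfl⟩⟩
  have hdiff : Tendsto (fun n => ‖v n - v₀‖) atTop (𝓝 0) :=
    tendsto_iff_norm_sub_tendsto_zero.1 hv
  have hzero : Tendsto (fun n => L n (v n - v₀)) atTop (𝓝 0) :=
    squeeze_zero_norm (fun n => (L n).le_of_opNorm_le (hC n) _) <| by
      simpa only [mul_zero] using hdiff.const_mul C
  simpa only [← map_add, sub_add_cancel, zero_add] using hzero.add (hL v₀)

namespace ERealConvexOn

theorem coe {X : Type*} [AddCommGroup X] [Module ℝ X] {U : Set X} {k : X → ℝ}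
    (hk : ConvexOn ℝ U k) : ERealConvexOn U fun x => (k x : EReal) := by
  intro x hx y hy a b ha hb hab
  simpa only [smul_eq_mul, EReal.coe_add, EReal.coe_mul] using
    EReal.coe_le_coe_iff.2 (hk.2 hx hy ha hb hab)

theorem of_affine_minorants {X : Type*} [AddCommGroup X] [Module ℝ X] {f : X → EReal}
    (h : ∀ (x : X) (r : ℝ), (r : EReal) < f x →
      ∃ (ξ : X →ₗ[ℝ] ℝ) (c : ℝ), (∀ w, ((c + ξ w : ℝ) : EReal) ≤ f w) ∧ r < c + ξ x) :
    ERealConvexOn univ f := by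
  intro x _ y _ a b ha hb hab
  by_contra! hlt
  obtain ⟨r, hr, hrf⟩ := EReal.lt_iff_exists_real_btwn.1 hlt
  obtain ⟨ξ, c, hminor, hrξ⟩ := h _ r hrf
  have hcomb : c + ξ (a • x + b • y) = a * (c + ξ x) + b * (c + ξ y) := by
    rw [map_add, map_smul, map_smul, smul_eq_mul, smul_eq_mul]
    linear_combination -c * hab
  have hle : ((c + ξ (a • x + b • y) : ℝ) : EReal) ≤ a * f x + b * f y := by
    rw [hcomb, EReal.coe_add, EReal.coe_mul, EReal.coe_mul]
    gcongr
    exacts [hminor x, hminor y]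
  exact hrξ.not_ge (EReal.coe_le_coe_iff.1 (hle.trans hr.le))

end ERealConvexOn

section Subdifferential

variable {X : Type*} [NormedAddCommGroup X] [NormedSpace ℝ X] {f : X → EReal}
  {T : X → Set (X →L[ℝ] ℝ)}

/-- Monotone set-valued operators from a normed space to its dual. -/
def IsMonotoneOperator (T : X → Set (X →L[ℝ] ℝ)) : Prop :=
  ∀ x₁ x₂ : X, ∀ ξ₁ ∈ T x₁, ∀ ξ₂ ∈ T x₂, 0 ≤ ξ₂ (x₂ - x₁) - ξ₁ (x₂ - x₁)

/-- The consequence of the sum rule (P2) on which the argument rests, for a single function `f`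
and an operator `T` in the role of `∂f`. A limiting subgradient `ξ` of `f` at a local minimizer `z`
of `f + k` with `-ξ ∈ ∂k(z)` satisfies `k z - k x ≤ ξ (x - z)`; only this inequality is kept, up to
an arbitrarily small error, for subgradients at points near `z`. -/
def HasFuzzySumRule (f : X → EReal) (T : X → Set (X →L[ℝ] ℝ)) : Prop :=
  ∀ (k : X → ℝ) (z : X), Continuous k → ConvexOn ℝ univ k → f z ≠ ⊤ →
    IsLocalMin (fun w => f w + (k w : EReal)) z →
    ∀ (x : X) (r : ℝ), r < k z - k x → ∃ᶠ u in 𝓝 z, ∃ ξ ∈ T u, r < ξ (x - u)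

theorem FeasibleSubdifferential.hasFuzzySumRule [CompleteSpace X] (D : FeasibleSubdifferential X)
    (hf : LowerSemicontinuous f) : HasFuzzySumRule f (D.D f) := by
  intro k z hkc hk hz hmin x r hr
  obtain ⟨u, ξ, ξ₀, hu, -, hξ, hξ₀, hsub⟩ := D.P2 f (fun w => k w) z univ hf hz isOpen_univ
    (mem_univ z) convex_univ (ERealConvexOn.coe hk)
    (continuous_coe_real_ereal.comp hkc).continuousOn
    (fun _ _ => ⟨EReal.coe_ne_top _, EReal.coe_ne_bot _⟩) hmin
  have hfenchel : k z + (-ξ₀) (x - z) ≤ k x := EReal.coe_le_coe_iff.1 (hsub x (mem_univ x))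
  have hlt : r < ξ₀ (x - z) := by
    rw [neg_apply] at hfenchel
    linarith
  have hlim : Tendsto (fun n => ξ n (x - u n)) atTop (𝓝 (ξ₀ (x - z))) :=
    tendsto_apply_of_forall_tendsto hξ₀ (hu.const_sub x)
  exact hu.frequently ((hlim.eventually_const_lt hlt).mono fun n hn => ⟨ξ n, hξ n, hn⟩).frequently

section

variable {q : X} {ζ : X →L[ℝ] ℝ}

theorem exists_forall_le_add_norm_mul_dist (hbot : f q ≠ ⊥)
    (hζ : ζ ∈ FenchelSubdiffOn f univ q) (x : X) :
    ∃ α : ℝ, ∀ w, (α : EReal) ≤ f w + (‖ζ‖ * dist w x : ℝ) := by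
  refine ⟨(f q).toReal + ζ (x - q), fun w => ?_⟩
  have hnorm : ζ (x - w) ≤ ‖ζ‖ * dist w x := by
    rw [dist_comm, dist_eq_norm]
    exact (le_abs_self _).trans (ζ.le_opNorm _)
  calc (((f q).toReal + ζ (x - q) : ℝ) : EReal)
      = (f q).toReal + (ζ (w - q) : ℝ) + (ζ (x - w) : ℝ) := by
        rw [add_assoc, ← EReal.coe_add, ← EReal.coe_add, ← map_add, add_comm (w - q),
          sub_add_sub_cancel]
    _ ≤ f q + (ζ (w - q) : ℝ) + (ζ (x - w) : ℝ) := by gcongr; exact EReal.coe_toReal_le hbot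
    _ ≤ f w + (‖ζ‖ * dist w x : ℝ) := by gcongr; exact hζ w (mem_univ w)

theorem exists_forall_le_add_mul_dist (hf : LowerSemicontinuous f) (hbot : f q ≠ ⊥)
    (hζ : ζ ∈ FenchelSubdiffOn f univ q) {x : X} {r : ℝ} (hr : (r : EReal) < f x) :
    ∃ K ≥ 0, ∀ w, (r : EReal) ≤ f w + (K * dist w x : ℝ) := by
  obtain ⟨α, hα⟩ := exists_forall_le_add_norm_mul_dist hbot hζ x
  obtain ⟨K, hK, hle⟩ := exists_forall_le_add_infDist (B := univ)
    (lowerSemicontinuous_add_coe hf (by fun_prop : Continuous fun w => ‖ζ‖ * dist w x))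
    (isCompact_singleton (x := x)) (singleton_nonempty x) (m := r)
    (by simpa using hr)
    fun w _ => hα w
  refine ⟨‖ζ‖ + K, by positivity, fun w => ?_⟩
  simpa only [infDist_singleton, add_assoc, add_mul, ← EReal.coe_add] using hle w (mem_univ w)

end

namespace HasFuzzySumRule

variable [CompleteSpace X]

theorem exists_mem_ball_frequently_lt_apply_sub (hT : HasFuzzySumRule f T)
    (hf : LowerSemicontinuous f) {k : X → ℝ} (hkc : Continuous k) (hk : ConvexOn ℝ univ k)
    {p : X} {R ε m : ℝ} (hR : 0 ≤ R) (hε : 0 < ε)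
    (hm : ∀ w ∈ closedBall p R, (m : EReal) ≤ f w + k w) (hp : f p + k p < (m + ε * R : ℝ)) :
    ∃ z ∈ ball p R, ∀ (x : X) (r : ℝ), r < k z - k x - ε * dist x z →
      ∃ᶠ u in 𝓝 z, ∃ ξ ∈ T u, r < ξ (x - u) := by
  obtain ⟨z, hzR, hz, hmin⟩ :=
    exists_isLocalMin_add_dist (lowerSemicontinuous_add_coe hf hkc) hε hR hm hp
  have hztop : f z ≠ ⊤ := fun h => hz (by rw [h, EReal.top_add_coe])
  have hmin' : IsLocalMin (fun w => f w + ((k w + ε * dist w z : ℝ) : EReal)) z := by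
    simpa only [EReal.coe_add, add_assoc] using hmin
  refine ⟨z, hzR, fun x r hr => ?_⟩
  have hr' : r < (k z + ε * dist z z) - (k x + ε * dist x z) := by
    rw [dist_self]
    linarith
  exact hT _ z (by fun_prop) (hk.add ((convexOn_univ_dist z).smul hε.le)) hztop hmin' x r hr'

theorem exists_ne_frequently_lt_apply_sub (hT : HasFuzzySumRule f T) (hf : LowerSemicontinuous f)
    (hbot : ∀ x, f x ≠ ⊥) {k : X → ℝ} (hkc : Continuous k) (hk : ConvexOn ℝ univ k) {S : Set X}
    (hS : IsCompact S) (hSconv : Convex ℝ S) {x y : X} (hx : x ∈ S) (hy : y ∈ S)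
    (hlt : f y + k y < f x + k x) {ε : ℝ} (hε : 0 < ε) :
    ∃ z ≠ x, ∀ r < k z - k x - ε * dist x z, ∃ᶠ u in 𝓝 z, ∃ ξ ∈ T u, r < ξ (x - u) := by
  have hφ := lowerSemicontinuous_add_coe hf hkc
  obtain ⟨p, hpS, hpmin⟩ := (hφ.lowerSemicontinuousOn S).exists_isMinOn ⟨y, hy⟩ hS
  have hpx : f p + k p < f x + k x := (hpmin hy).trans_lt hlt
  have hne : p ≠ x := fun h => (h ▸ hpx).false
  obtain ⟨R, hR, hRx, K, hK, m, hpm, hm⟩ := exists_closedBall_forall_le_add_infDist hφ hS hpS hpmin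
    (EReal.add_ne_bot_iff.2 ⟨hbot p, EReal.coe_ne_bot _⟩) hpx.ne_top hε (dist_pos.2 hne)
  let kS (w : X) : ℝ := k w + K * infDist w S
  have hkS {w : X} (hw : w ∈ S) : kS w = k w := by
    simp only [kS, infDist_zero_of_mem hw, mul_zero, add_zero]
  obtain ⟨z, hzR, hz⟩ := hT.exists_mem_ball_frequently_lt_apply_sub hf (k := kS) (by fun_prop)
    (hk.add ((convexOn_infDist hSconv).smul hK)) hR.le hε
    (fun w hw => by simpa only [kS, EReal.coe_add, add_assoc] using hm w hw)
    (by rwa [hkS hpS])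
  refine ⟨z, fun hzx => ?_, fun r hr => hz x r ?_⟩
  · rw [hzx, mem_ball'] at hzR
    exact hzR.not_gt hRx
  · have hkz : k z ≤ kS z := le_add_of_nonneg_right (mul_nonneg hK infDist_nonneg)
    rw [hkS hx]
    linarith

theorem exists_apply_sub_lt_apply_sub (hT : HasFuzzySumRule f T) (hf : LowerSemicontinuous f)
    (hbot : ∀ x, f x ≠ ⊥) {x y : X} (ξ : X →L[ℝ] ℝ) (h : f y < f x + (ξ (y - x) : ℝ)) :
    ∃ u, ∃ ζ ∈ T u, ξ (x - u) < ζ (x - u) := by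
  obtain ⟨c, hc, hcy⟩ := exists_pos_add_mul_lt (hbot y) h (dist y x)
  let k (w : X) : ℝ := c * dist w x - ξ w
  have hk : ConvexOn ℝ univ k :=
    ((convexOn_univ_dist x).smul hc.le).sub ((ξ : X →ₗ[ℝ] ℝ).concaveOn convex_univ)
  have hlt : f y + k y < f x + k x := calc
    f y + k y = f y + (c * dist y x : ℝ) + (-ξ y : ℝ) := by
      rw [add_assoc, ← EReal.coe_add, ← sub_eq_add_neg]
    _ < f x + (ξ (y - x) : ℝ) + (-ξ y : ℝ) := EReal.add_lt_add_right_coe hcy _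
    _ = f x + k x := by
      rw [add_assoc, ← EReal.coe_add]
      congr 2
      simp only [k, map_sub, dist_self]
      ring
  have hS : IsCompact (segment ℝ y x) :=
    convexHull_pair (𝕜 := ℝ) y x ▸ (toFinite {y, x}).isCompact_convexHull ℝ
  obtain ⟨z, hzx, hz⟩ := hT.exists_ne_frequently_lt_apply_sub hf hbot (by fun_prop) hk hS
    (convex_segment y x) (right_mem_segment ℝ y x) (left_mem_segment ℝ y x) hlt (half_pos hc)
  obtain ⟨r, hξr, hr⟩ : ∃ r, ξ (x - z) < r ∧ r < k z - k x - c / 2 * dist x z := by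
    apply exists_between
    have hpos : 0 < c * dist x z := mul_pos hc (dist_pos.2 hzx.symm)
    simp only [k, dist_self, dist_comm z x, map_sub]
    linarith
  have hξ : ∀ᶠ u in 𝓝 z, ξ (x - u) < r :=
    (by fun_prop : Continuous fun u => ξ (x - u)).continuousAt.eventually_lt_const hξr
  obtain ⟨u, ⟨ζ, hζ, hru⟩, hu⟩ := ((hz r hr).and_eventually hξ).exists
  exact ⟨u, ζ, hζ, hu.trans hru⟩

theorem subset_fenchelSubdiffOn (hT : HasFuzzySumRule f T) (hmon : IsMonotoneOperator T)
    (hf : LowerSemicontinuous f) (hbot : ∀ x, f x ≠ ⊥) (x : X) :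
    T x ⊆ FenchelSubdiffOn f univ x := by
  intro ξ hξ y _
  by_contra! hlt
  obtain ⟨u, ζ, hζ, hu⟩ := hT.exists_apply_sub_lt_apply_sub hf hbot ξ hlt
  exact hu.not_ge (sub_nonneg.1 (hmon u x ζ hζ ξ hξ))

theorem exists_mem_of_ne_top (hT : HasFuzzySumRule f T) (hf : LowerSemicontinuous f)
    {p : X} (hbot : f p ≠ ⊥) (hp : f p ≠ ⊤) : ∃ u ξ, ξ ∈ T u := by
  lift f p to ℝ using ⟨hp, hbot⟩ with a ha
  obtain ⟨r, hr, hball⟩ := exists_closedBall_forall_le (hf p)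
    ((EReal.coe_lt_coe_iff.2 (sub_one_lt a)).trans_eq ha)
  have hlt : f p + (0 : ℝ) < (a - 1 + 2 / r * r : ℝ) := by
    rw [← ha, EReal.coe_zero, add_zero, div_mul_cancel₀ _ hr.ne']
    exact EReal.coe_lt_coe_iff.2 (by linarith)
  obtain ⟨z, -, hz⟩ := hT.exists_mem_ball_frequently_lt_apply_sub hf (k := fun _ => 0)
    continuous_const (convexOn_const 0 convex_univ) hr.le (by positivity)
    (by simpa only [EReal.coe_zero, add_zero] using hball) hlt
  obtain ⟨u, ξ, hξ, -⟩ := (hz z (-1) (by simp)).exists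
  exact ⟨u, ξ, hξ⟩

theorem exists_lt_add_apply_sub_of_forall_le (hT : HasFuzzySumRule f T)
    (hf : LowerSemicontinuous f) {p x : X} (hbot : f p ≠ ⊥) (htop : f p ≠ ⊤) {K r r' : ℝ}
    (hK : 0 ≤ K) (hcone : ∀ w, (r' : EReal) ≤ f w + (K * dist w x : ℝ)) (hrr' : r < r') :
    ∃ u, ∃ ξ ∈ T u, (r : EReal) < f u + (ξ (x - u) : ℝ) := by
  let k (w : X) : ℝ := (K + 1) * dist w x
  have hk : ConvexOn ℝ univ k := (convexOn_univ_dist x).smul (by positivity)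
  obtain ⟨R, hR, hpR⟩ : ∃ R ≥ 0, f p + k p < (r' + 1 * R : ℝ) := by
    lift f p to ℝ using ⟨htop, hbot⟩ with a ha
    refine ⟨|a + k p - r'| + 1, by positivity, EReal.coe_lt_coe_iff.2 ?_⟩
    linarith [le_abs_self (a + k p - r')]
  obtain ⟨z, -, hz⟩ := hT.exists_mem_ball_frequently_lt_apply_sub hf (by fun_prop) hk hR one_pos
    (fun w _ => (hcone w).trans (by simp only [k]; gcongr; linarith)) hpR
  obtain ⟨η, hη, hrη⟩ : ∃ η > 0, r + η = r' - η :=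
    ⟨(r' - r) / 2, half_pos (sub_pos.2 hrr'), by ring⟩
  have hfz : ((r' - K * dist z x - η : ℝ) : EReal) < f z := by
    by_contra! hle
    have hcontra : (r' : EReal) ≤ (r' - K * dist z x - η + K * dist z x : ℝ) := by
      rw [EReal.coe_add]
      exact (hcone z).trans (by gcongr)
    linarith [EReal.coe_le_coe_iff.1 hcontra]
  have hkz : K * dist z x - η < k z - k x - 1 * dist x z := by
    simp only [k, dist_self, dist_comm x z]
    linarith
  obtain ⟨u, ⟨ξ, hξ, hlt⟩, hfu⟩ := ((hz x _ hkz).and_eventually (hf z _ hfz)).exists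
  refine ⟨u, ξ, hξ, ?_⟩
  calc (r : EReal) = (r' - K * dist z x - η : ℝ) + (K * dist z x - η : ℝ) := by
        rw [← EReal.coe_add]
        congr 1
        linarith
    _ < f u + (ξ (x - u) : ℝ) := EReal.add_lt_add hfu (EReal.coe_lt_coe_iff.2 hlt)

theorem exists_lt_add_apply_sub (hT : HasFuzzySumRule f T) (hmon : IsMonotoneOperator T)
    (hf : LowerSemicontinuous f) (hbot : ∀ x, f x ≠ ⊥) (hproper : ∃ x, f x ≠ ⊤) {x : X} {r : ℝ}
    (hr : (r : EReal) < f x) : ∃ u, ∃ ξ ∈ T u, (r : EReal) < f u + (ξ (x - u) : ℝ) := by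
  obtain ⟨p, hp⟩ := hproper
  obtain ⟨q, ζ, hζ⟩ := hT.exists_mem_of_ne_top hf (hbot p) hp
  obtain ⟨r', hrr', hr'⟩ := EReal.lt_iff_exists_real_btwn.1 hr
  obtain ⟨K, hK, hcone⟩ := exists_forall_le_add_mul_dist hf (hbot q)
    (hT.subset_fenchelSubdiffOn hmon hf hbot q hζ) hr'
  exact hT.exists_lt_add_apply_sub_of_forall_le hf (hbot p) hp hK hcone
    (EReal.coe_lt_coe_iff.1 hrr')

end HasFuzzySumRule

end Subdifferential

theorem correa_jofre_thibault_general {X : Type*} [NormedAddCommGroup X] [NormedSpace ℝ X]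
    [CompleteSpace X] {T : X → Set (X →L[ℝ] ℝ)} {f : X → EReal} (hT : HasFuzzySumRule f T)
    (hmon : IsMonotoneOperator T) (hbot : ∀ x, f x ≠ ⊥) (hproper : ∃ x, f x ≠ ⊤)
    (hf : LowerSemicontinuous f) : ERealConvexOn univ f := by
  have hsub := hT.subset_fenchelSubdiffOn hmon hf hbot
  refine ERealConvexOn.of_affine_minorants fun x r hr => ?_
  obtain ⟨u, ξ, hξ, hlt⟩ := hT.exists_lt_add_apply_sub hmon hf hbot hproper hr
  obtain ⟨p, hp⟩ := hproper
  have hu : f u ≠ ⊤ := fun h => hp <| top_le_iff.1 <| by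
    simpa only [h, EReal.top_add_coe] using hsub u hξ p (mem_univ p)
  lift f u to ℝ using ⟨hu, hbot u⟩ with a ha
  have haffine (w : X) : a - ξ u + ξ w = a + ξ (w - u) := by rw [map_sub]; ring
  refine ⟨ξ, a - ξ u, fun w => ?_, ?_⟩
  · simpa only [ha, EReal.coe_add, ContinuousLinearMap.coe_coe, haffine] using
      hsub u hξ w (mem_univ w)
  · rw [ContinuousLinearMap.coe_coe, haffine]
    exact EReal.coe_lt_coe_iff.1 hlt

/-- Correa–Jofré–Thibault theorem: monotonicity of a feasible subdifferential implies
convexity of the function. -/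
theorem correa_jofre_thibault {X : Type*} [NormedAddCommGroup X] [NormedSpace ℝ X]
    [CompleteSpace X]
    (D : FeasibleSubdifferential X)
    (f : X → EReal) (hfbot : ∀ x, f x ≠ ⊥) (hfproper : ∃ x, f x ≠ ⊤)
    (hflsc : LowerSemicontinuous f)
    (hmon : ∀ x₁ x₂ : X, ∀ x₁s ∈ D.D f x₁, ∀ x₂s ∈ D.D f x₂,
      0 ≤ x₂s (x₂ - x₁) - x₁s (x₂ - x₁)) :
    ERealConvexOn Set.univ f :=
  correa_jofre_thibault_general (D.hasFuzzySumRule hflsc) hmon hfbot hfproper hflsc
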